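/- arXiv:2102.07103 — 2 statements merged into one kernel-verified Lean document; each statement's English description precedes it below -/
import Mathlib

section
/- Suppose K, L ∈ K₀ⁿ, regarded as subsets of ℝ^{n-1} × ℝ. Then S(K*) ⊆ L* if and only if the following holds: whenever x' ∈ ℝ^{n-1} and t, s ∈ ℝ with t ≠ −s satisfy h_K(x', t) = 1 = h_K(x', −s), one has h_L(x', t/2 + s/2) ≤ 1. Here S denotes Steiner symmetrization about the hyperplane e_n^⊥. -/
open MeasureTheory Filter Metric

/-- Orthogonal projection of `ℝⁿ` onto the hyperplane `u^⊥` through the origin. -/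
noncomputable def steinerProj {n : ℕ} (u : EuclideanSpace ℝ (Fin n)) :
    EuclideanSpace ℝ (Fin n) → EuclideanSpace ℝ (Fin n) :=
  fun z => ((Submodule.orthogonalProjectionOnto (Submodule.span ℝ {u})ᗮ) z : EuclideanSpace ℝ (Fin n))

/-- `ℓ_{E,u}(x')` : the one-dimensional Lebesgue measure of `{t : x' + t u ∈ E}`. -/
noncomputable def steinerLen {n : ℕ} (u : EuclideanSpace ℝ (Fin n))
    (E : Set (EuclideanSpace ℝ (Fin n))) (x' : EuclideanSpace ℝ (Fin n)) : ℝ :=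
  (volume {t : ℝ | x' + t • u ∈ E}).toReal

/-- Steiner symmetrization of `E` about the hyperplane `u^⊥`:
`S_u E = {x' + t u : x' ∈ π_u(E), |t| ≤ ℓ_{E,u}(x')/2}`. -/
noncomputable def steiner {n : ℕ} (u : EuclideanSpace ℝ (Fin n))
    (E : Set (EuclideanSpace ℝ (Fin n))) : Set (EuclideanSpace ℝ (Fin n)) :=
  {x | ∃ x' ∈ steinerProj u '' E, ∃ t : ℝ, |t| ≤ steinerLen u E x' / 2 ∧ x = x' + t • u}

/-- The last standard basis vector `e_n` of `ℝⁿ` (junk value `0` if `n = 0`). -/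
noncomputable def lastDir (n : ℕ) : EuclideanSpace ℝ (Fin n) :=
  if h : n = 0 then 0
  else EuclideanSpace.single ⟨n - 1, Nat.sub_lt (Nat.pos_of_ne_zero h) one_pos⟩ 1

/-- `max_{x ∈ E} |x|` for a (nonempty compact) set `E ⊆ ℝⁿ`. -/
noncomputable def maxNorm {n : ℕ} (E : Set (EuclideanSpace ℝ (Fin n))) : ℝ :=
  sSup ((fun x => ‖x‖) '' E)

/-- Support function `h_K(z) = max {z·y : y ∈ K}` of a set `K ⊆ ℝⁿ`. -/
noncomputable def suppFn {n : ℕ} (K : Set (EuclideanSpace ℝ (Fin n)))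
    (z : EuclideanSpace ℝ (Fin n)) : ℝ :=
  sSup ((fun y => (inner ℝ z y : ℝ)) '' K)

/-- Polar body `K* = {x : x·z ≤ 1 for all z ∈ K}`. -/
def polarBody {n : ℕ} (K : Set (EuclideanSpace ℝ (Fin n))) :
    Set (EuclideanSpace ℝ (Fin n)) :=
  {x | ∀ z ∈ K, (inner ℝ x z : ℝ) ≤ 1}

/-!
The polar body `K*` is the sublevel set `{h_K ≤ 1}` and is compact and convex, so it meets each line
parallel to `u` in a segment. Over `x'`, the symmetral `S_u K*` therefore consists of the points
`x' + ((t - s) / 2) u` with `x' + t u` and `x' + s u` in `K*`, and `S_u K* ⊆ L*` says that all of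
these lie in `L*`. If the segment is nondegenerate, it suffices to test its two end points in both
orders, because `L*` is convex; and `h_K = 1` at the end points. A degenerate segment is reached as
a limit: after scaling by `l < 1` its point lies in `{h_K < 1}`, hence on a nondegenerate segment.
-/

section LineSlice

variable {V : Type*} [AddCommGroup V] [Module ℝ V] {E : Set V}

/-- The slice of `E` by the line through `x` in direction `u`, as a set of parameters: the set
whose measure enters the Steiner symmetrization. The base point `x` need not be orthogonal to
`u`, nor `u` a unit vector. -/
def lineSlice (E : Set V) (x u : V) : Set ℝ :=
  {t | x + t • u ∈ E}

theorem mem_lineSlice {x u : V} {t : ℝ} : t ∈ lineSlice E x u ↔ x + t • u ∈ E :=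
  Iff.rfl

theorem convex_lineSlice (hE : Convex ℝ E) (x u : V) : Convex ℝ (lineSlice E x u) :=
  (hE.translate_preimage_right x).linear_preimage (LinearMap.toSpanSingleton ℝ V u)

variable [TopologicalSpace V] [ContinuousSMul ℝ V]

theorem mem_of_isClosed_of_forall_smul_mem (hE : IsClosed E) {x : V}
    (h : ∀ l ∈ Set.Ioo (0 : ℝ) 1, l • x ∈ E) : x ∈ E := by
  have hlim : Tendsto (fun l : ℝ => l • x) (nhdsWithin 1 (Set.Iio 1)) (nhds ((1 : ℝ) • x)) :=
    (continuous_id.smul continuous_const).continuousWithinAt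
  rw [one_smul] at hlim
  exact hE.mem_of_tendsto hlim (eventually_of_mem (Ioo_mem_nhdsLT one_pos) h)

variable [IsTopologicalAddGroup V] [T2Space V] {u : V}

theorem isCompact_lineSlice (hE : IsCompact E) (x : V) (hu : u ≠ 0) :
    IsCompact (lineSlice E x u) :=
  ((Homeomorph.addLeft x).isClosedEmbedding.comp
    (isClosedEmbedding_smul_left hu)).isCompact_preimage hE

theorem exists_lineSlice_eq_Icc (hE : IsCompact E) (hconv : Convex ℝ E) (hu : u ≠ 0) {x : V}
    (hne : (lineSlice E x u).Nonempty) : ∃ a b : ℝ, a ≤ b ∧ lineSlice E x u = Set.Icc a b := by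
  have h := eq_Icc_of_connected_compact ((convex_lineSlice hconv x u).isConnected hne)
    (isCompact_lineSlice hE x hu)
  exact ⟨_, _, Set.nonempty_Icc.1 (h ▸ hne), h⟩

end LineSlice

theorem exists_mem_Icc_sub_div_two_eq_iff {a b r : ℝ} :
    (∃ t ∈ Set.Icc a b, ∃ s ∈ Set.Icc a b, (t - s) / 2 = r) ↔ |r| ≤ (b - a) / 2 := by
  rw [abs_le]
  constructor
  · rintro ⟨t, ht, s, hs, rfl⟩
    constructor <;> linarith [ht.1, ht.2, hs.1, hs.2]
  · rintro ⟨hl, hr⟩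
    refine ⟨(a + b) / 2 + r, ⟨?_, ?_⟩, (a + b) / 2 - r, ⟨?_, ?_⟩, ?_⟩ <;> linarith

section Steiner

variable {n : ℕ} {E F : Set (EuclideanSpace ℝ (Fin n))} {u x' : EuclideanSpace ℝ (Fin n)}

theorem lastDir_ne_zero (hn : n ≠ 0) : lastDir n ≠ 0 := by
  simp [lastDir, hn]

theorem steinerProj_add_smul (hx' : x' ∈ (Submodule.span ℝ {u})ᗮ) (t : ℝ) :
    steinerProj u (x' + t • u) = x' := by
  refine Submodule.eq_starProjection_of_mem_orthogonal hx' ?_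
  rw [add_sub_cancel_left]
  exact Submodule.le_orthogonal_orthogonal _ (Submodule.mem_span_singleton.2 ⟨t, rfl⟩)

theorem exists_steinerProj_add_smul_eq (u z : EuclideanSpace ℝ (Fin n)) :
    ∃ t : ℝ, steinerProj u z + t • u = z := by
  obtain ⟨t, ht⟩ := Submodule.mem_span_singleton.1
    ((Submodule.span ℝ {u}).starProjection_apply_mem z)
  refine ⟨t, ?_⟩
  rw [ht, add_comm]
  exact (Submodule.span ℝ {u}).starProjection_add_starProjection_orthogonal z

theorem mem_image_steinerProj_iff :
    x' ∈ steinerProj u '' E ↔ x' ∈ (Submodule.span ℝ {u})ᗮ ∧ (lineSlice E x' u).Nonempty := by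
  constructor
  · rintro ⟨z, hz, rfl⟩
    obtain ⟨t, ht⟩ := exists_steinerProj_add_smul_eq u z
    exact ⟨Submodule.coe_mem _, t, mem_lineSlice.2 (ht.symm ▸ hz)⟩
  · rintro ⟨hx', t, ht⟩
    exact ⟨_, ht, steinerProj_add_smul hx' t⟩

theorem steinerLen_of_lineSlice_eq_Icc {a b : ℝ} (hab : a ≤ b)
    (h : lineSlice E x' u = Set.Icc a b) : steinerLen u E x' = b - a :=
  calc steinerLen u E x' = (volume (Set.Icc a b)).toReal := by rw [← h]; rfl
    _ = b - a := by rw [Real.volume_Icc, ENNReal.toReal_ofReal (sub_nonneg.2 hab)]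

theorem abs_le_steinerLen_div_two_iff (hE : IsCompact E) (hconv : Convex ℝ E) (hu : u ≠ 0)
    (hne : (lineSlice E x' u).Nonempty) {r : ℝ} :
    |r| ≤ steinerLen u E x' / 2 ↔
      ∃ t ∈ lineSlice E x' u, ∃ s ∈ lineSlice E x' u, (t - s) / 2 = r := by
  obtain ⟨a, b, hab, hslice⟩ := exists_lineSlice_eq_Icc hE hconv hu hne
  rw [steinerLen_of_lineSlice_eq_Icc hab hslice, hslice, exists_mem_Icc_sub_div_two_eq_iff]

theorem steiner_subset_iff (hE : IsCompact E) (hconv : Convex ℝ E) (hu : u ≠ 0) :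
    steiner u E ⊆ F ↔ ∀ x' ∈ (Submodule.span ℝ {u})ᗮ, ∀ t ∈ lineSlice E x' u,
      ∀ s ∈ lineSlice E x' u, (t - s) / 2 ∈ lineSlice F x' u := by
  constructor
  · intro hsub x' hx' t ht s hs
    exact hsub ⟨x', mem_image_steinerProj_iff.2 ⟨hx', t, ht⟩, _,
      (abs_le_steinerLen_div_two_iff hE hconv hu ⟨t, ht⟩).2 ⟨t, ht, s, hs, rfl⟩, rfl⟩
  · rintro h _ ⟨x', hproj, r, hr, rfl⟩
    obtain ⟨hx', hne⟩ := mem_image_steinerProj_iff.1 hproj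
    obtain ⟨t, ht, s, hs, rfl⟩ := (abs_le_steinerLen_div_two_iff hE hconv hu hne).1 hr
    exact h x' hx' t ht s hs

end Steiner

section PolarBody

variable {n : ℕ} {K L : Set (EuclideanSpace ℝ (Fin n))} {u x : EuclideanSpace ℝ (Fin n)}

theorem polarBody_eq_iInter (K : Set (EuclideanSpace ℝ (Fin n))) :
    polarBody K = ⋂ z ∈ K, {x | inner ℝ x z ≤ 1} := by
  ext x
  simp [polarBody]

theorem isClosed_polarBody (K : Set (EuclideanSpace ℝ (Fin n))) : IsClosed (polarBody K) := by
  rw [polarBody_eq_iInter]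
  exact isClosed_biInter fun z _ => isClosed_le (by fun_prop) continuous_const

theorem convex_polarBody (K : Set (EuclideanSpace ℝ (Fin n))) : Convex ℝ (polarBody K) := by
  rw [polarBody_eq_iInter]
  exact convex_iInter₂ fun z _ =>
    convex_halfSpace_le ((innerₗ (EuclideanSpace ℝ (Fin n))).flip z).isLinear 1

theorem isBounded_polarBody (hK0 : 0 ∈ interior K) : Bornology.IsBounded (polarBody K) := by
  obtain ⟨δ, hδ, hball⟩ := nhds_basis_closedBall.mem_iff.1 (mem_interior_iff_mem_nhds.1 hK0)
  refine (isBounded_closedBall (x := 0) (r := δ⁻¹)).subset fun x hx => mem_closedBall_zero_iff.2 ?_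
  rcases eq_or_ne x 0 with rfl | hx0
  · simpa using hδ.le
  have hz : (δ / ‖x‖) • x ∈ K := hball <| by
    rw [mem_closedBall_zero_iff, norm_smul, norm_div, norm_norm, Real.norm_of_nonneg hδ.le,
      div_mul_cancel₀ _ (norm_ne_zero_iff.2 hx0)]
  have hinner : inner ℝ x ((δ / ‖x‖) • x) = ‖x‖ * δ := by
    rw [real_inner_smul_right, real_inner_self_eq_norm_sq]
    field_simp
  rw [← one_div, le_div_iff₀ hδ, ← hinner]
  exact hx _ hz

theorem isCompact_polarBody (hK0 : 0 ∈ interior K) : IsCompact (polarBody K) :=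
  isCompact_of_isClosed_isBounded (isClosed_polarBody K) (isBounded_polarBody hK0)

theorem continuous_suppFn (hK : IsCompact K) : Continuous (suppFn K) :=
  hK.continuous_sSup (f := fun z y => inner ℝ z y) continuous_inner

theorem suppFn_smul_of_nonneg {l : ℝ} (hl : 0 ≤ l) (K : Set (EuclideanSpace ℝ (Fin n)))
    (x : EuclideanSpace ℝ (Fin n)) : suppFn K (l • x) = l * suppFn K x := by
  simp only [suppFn, ← smul_eq_mul, ← Real.sSup_smul_of_nonneg hl, ← Set.image_smul,
    Set.image_image, real_inner_smul_left]

theorem mem_polarBody_iff_suppFn_le_one (hK : IsCompact K) (hne : K.Nonempty) :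
    x ∈ polarBody K ↔ suppFn K x ≤ 1 := by
  rw [suppFn, csSup_le_iff (hK.image (by fun_prop)).bddAbove (hne.image _), Set.forall_mem_image]
  rfl

theorem suppFn_smul_lt_one (hK : IsCompact K) (hne : K.Nonempty) (hx : x ∈ polarBody K) {l : ℝ}
    (hl : l ∈ Set.Ioo (0 : ℝ) 1) : suppFn K (l • x) < 1 :=
  calc suppFn K (l • x) = l * suppFn K x := suppFn_smul_of_nonneg hl.1.le K x
    _ ≤ l := mul_le_of_le_one_right hl.1.le ((mem_polarBody_iff_suppFn_le_one hK hne).1 hx)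
    _ < 1 := hl.2

theorem suppFn_eq_one_of_mem_frontier_lineSlice (hK : IsCompact K) (hne : K.Nonempty) {t : ℝ}
    (ht : t ∈ frontier (lineSlice (polarBody K) x u)) : suppFn K (x + t • u) = 1 := by
  have hcont : Continuous fun t : ℝ => suppFn K (x + t • u) :=
    (continuous_suppFn hK).comp (by fun_prop)
  have hslice : lineSlice (polarBody K) x u = {t | suppFn K (x + t • u) ≤ 1} :=
    Set.ext fun _ => mem_polarBody_iff_suppFn_le_one hK hne
  exact frontier_le_subset_eq hcont continuous_const (hslice ▸ ht)

theorem exists_lineSlice_polarBody_eq_Icc (hK : IsCompact K) (hK0 : 0 ∈ interior K) (hu : u ≠ 0)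
    (hne : (lineSlice (polarBody K) x u).Nonempty) :
    ∃ a b : ℝ, lineSlice (polarBody K) x u = Set.Icc a b ∧
      suppFn K (x + a • u) = 1 ∧ suppFn K (x + b • u) = 1 := by
  obtain ⟨a, b, hab, hslice⟩ :=
    exists_lineSlice_eq_Icc (isCompact_polarBody hK0) (convex_polarBody K) hu hne
  have hfrontier : frontier (lineSlice (polarBody K) x u) = {a, b} := by
    rw [hslice, frontier_Icc hab]
  have hends : ∀ c ∈ ({a, b} : Set ℝ), suppFn K (x + c • u) = 1 := fun c hc =>
    suppFn_eq_one_of_mem_frontier_lineSlice hK ⟨0, interior_subset hK0⟩ (hfrontier ▸ hc)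
  exact ⟨a, b, hslice, hends a (by simp), hends b (by simp)⟩

theorem sub_div_two_mem_lineSlice_polarBody (hK : IsCompact K) (hK0 : 0 ∈ interior K)
    (hL : IsCompact L) (hLne : L.Nonempty) (hu : u ≠ 0)
    (hends : ∀ t s : ℝ, t ≠ -s → suppFn K (x + t • u) = 1 → suppFn K (x + (-s) • u) = 1 →
      suppFn L (x + (t / 2 + s / 2) • u) ≤ 1)
    {t s : ℝ} (ht : suppFn K (x + t • u) < 1) (hs : s ∈ lineSlice (polarBody K) x u) :
    (t - s) / 2 ∈ lineSlice (polarBody L) x u := by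
  have htmem : t ∈ lineSlice (polarBody K) x u :=
    (mem_polarBody_iff_suppFn_le_one hK ⟨0, interior_subset hK0⟩).2 ht.le
  obtain ⟨a, b, hslice, ha, hb⟩ := exists_lineSlice_polarBody_eq_Icc hK hK0 hu ⟨t, htmem⟩
  rw [hslice] at htmem hs
  have hab : a ≠ b := by
    rintro rfl
    exact ht.ne (le_antisymm htmem.2 htmem.1 ▸ ha)
  have hmid : ∀ c d : ℝ, c ≠ d → suppFn K (x + c • u) = 1 → suppFn K (x + d • u) = 1 →
      c / 2 + -d / 2 ∈ lineSlice (polarBody L) x u := fun c d hcd hc hd =>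
    (mem_polarBody_iff_suppFn_le_one hL hLne).2 <|
      hends c (-d) (by rwa [neg_neg]) hc (by rwa [neg_neg])
  refine (convex_lineSlice (convex_polarBody L) x u).ordConnected.out
    (hmid a b hab ha hb) (hmid b a hab.symm hb ha) ?_
  constructor <;> linarith [htmem.1, htmem.2, hs.1, hs.2]

end PolarBody

theorem stmt7_general {n : ℕ} {u : EuclideanSpace ℝ (Fin n)} (hu : u ≠ 0)
    {K L : Set (EuclideanSpace ℝ (Fin n))} (hK : IsCompact K) (hK0 : 0 ∈ interior K)
    (hL : IsCompact L) (hLne : L.Nonempty) :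
    steiner u (polarBody K) ⊆ polarBody L ↔
      ∀ x' ∈ (Submodule.span ℝ {u})ᗮ, ∀ t s : ℝ, t ≠ -s →
        suppFn K (x' + t • u) = 1 → suppFn K (x' + (-s) • u) = 1 →
        suppFn L (x' + (t / 2 + s / 2) • u) ≤ 1 := by
  have hKne : K.Nonempty := ⟨0, interior_subset hK0⟩
  rw [steiner_subset_iff (isCompact_polarBody hK0) (convex_polarBody K) hu]
  constructor
  · intro hchord x' hx' t s _ ht hs
    have hmem := hchord x' hx' t ((mem_polarBody_iff_suppFn_le_one hK hKne).2 ht.le)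
      (-s) ((mem_polarBody_iff_suppFn_le_one hK hKne).2 hs.le)
    rwa [sub_neg_eq_add, add_div, mem_lineSlice,
      mem_polarBody_iff_suppFn_le_one hL hLne] at hmem
  · intro hends x' hx' t ht s hs
    -- The slice over `x'` may be a single point, about which `hends` says nothing; the slice over
    -- `l • x'` never is.
    refine mem_of_isClosed_of_forall_smul_mem (isClosed_polarBody L) fun l hl => ?_
    have hsmul : ∀ r : ℝ, l • (x' + r • u) = l • x' + (l * r) • u := fun r => by
      rw [smul_add, smul_smul]
    have htl := suppFn_smul_lt_one hK hKne ht hl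
    have hsl := suppFn_smul_lt_one hK hKne hs hl
    rw [hsmul] at htl hsl ⊢
    rw [← mul_div_assoc, mul_sub]
    exact sub_div_two_mem_lineSlice_polarBody hK hK0 hL hLne hu
      (hends _ (Submodule.smul_mem _ l hx')) htl
      ((mem_polarBody_iff_suppFn_le_one hK hKne).2 hsl.le)

/-- Lutwak–Yang–Zhang: for convex bodies `K, L` containing the origin in their interiors,
`S(K*) ⊆ L*` iff whenever `h_K(x',t) = 1 = h_K(x',-s)` with `t ≠ -s`, one has
`h_L(x', t/2 + s/2) ≤ 1`. Here `S` is Steiner symmetrization about `e_n^⊥`. -/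
theorem stmt7 (n : ℕ) (hn : 2 ≤ n)
    (K L : Set (EuclideanSpace ℝ (Fin n)))
    (hKcomp : IsCompact K) (hKconv : Convex ℝ K)
    (hK0 : (0 : EuclideanSpace ℝ (Fin n)) ∈ interior K)
    (hLcomp : IsCompact L) (hLconv : Convex ℝ L)
    (hL0 : (0 : EuclideanSpace ℝ (Fin n)) ∈ interior L) :
    steiner (lastDir n) (polarBody K) ⊆ polarBody L ↔
      ∀ x' ∈ (Submodule.span ℝ {lastDir n})ᗮ, ∀ t s : ℝ, t ≠ -s →
        suppFn K (x' + t • lastDir n) = 1 →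
        suppFn K (x' + (-s) • lastDir n) = 1 →
        suppFn L (x' + (t / 2 + s / 2) • lastDir n) ≤ 1 := by
  exact stmt7_general (lastDir_ne_zero (by lia)) hKcomp hK0 hLcomp ⟨0, interior_subset hL0⟩
end

section
/- Let n ≥ 2, r > 0, and let E ⊆ ℝⁿ be a nonempty compact set contained in the closed ball B̄_r of radius r centered at the origin. Suppose there exists a nonempty relatively open subset U of the sphere ∂B̄_r = {x : |x| = r} with U ∩ E = ∅. Then there exist finitely many unit vectors v_1, …, v_m such that max_{x ∈ S_{v_m}⋯S_{v_1}E} |x| < r. -/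
open MeasureTheory Filter Metric

/-!
A point of the sphere of radius `r` survives in `S_u E` only if its whole chord in direction `u`
lies in `E`: the fiber of `E` is a closed subset of that chord, and it must have full length. In
particular the point and its mirror image in `u^⊥` both lie in `E`. Any two points of the sphere are
mirror images of each other, so by compactness finitely many mirror images of the missing open
piece cover the rest of the sphere, and symmetrizing in these directions leaves no point of the
sphere.
-/

section InnerProductSpace

variable {F : Type*} [NormedAddCommGroup F] [InnerProductSpace ℝ F]

theorem norm_add_smul_sq_of_inner_eq_zero {u p : F} (hu : ‖u‖ = 1) (hp : inner ℝ u p = 0) (t : ℝ) :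
    ‖p + t • u‖ ^ 2 = ‖p‖ ^ 2 + t ^ 2 := by
  rw [norm_add_sq_real, inner_smul_right, real_inner_comm, hp, norm_smul, hu, mul_one,
    Real.norm_eq_abs, sq_abs, mul_zero, mul_zero, add_zero]

theorem exists_norm_eq_one_reflection_eq {x y : F} (hxy : ‖x‖ = ‖y‖) (hne : x ≠ y) :
    ∃ v : F, ‖v‖ = 1 ∧ (Submodule.span ℝ {v})ᗮ.reflection x = y := by
  have hsub : x - y ≠ 0 := sub_ne_zero.2 hne
  have hunit : IsUnit ‖x - y‖⁻¹ := (inv_ne_zero (norm_ne_zero_iff.2 hsub)).isUnit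
  refine ⟨‖x - y‖⁻¹ • (x - y), norm_smul_inv_norm hsub, ?_⟩
  simp only [Submodule.span_singleton_smul_eq hunit]
  exact Submodule.reflection_sub hxy

theorem exists_finite_reflection_cover {K V : Set F} {r : ℝ} {x₀ : F} (hK : IsCompact K)
    (hKr : K ⊆ sphere 0 r) (hV : IsOpen V) (hx₀V : x₀ ∈ V) (hx₀r : x₀ ∈ sphere 0 r) :
    ∃ s ⊆ sphere (0 : F) 1, s.Finite ∧
      K ⊆ V ∪ ⋃ v ∈ s, (Submodule.span ℝ {v})ᗮ.reflection ⁻¹' V := by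
  have hcover : K \ V ⊆ ⋃ v ∈ sphere (0 : F) 1, (Submodule.span ℝ {v})ᗮ.reflection ⁻¹' V := by
    rintro y ⟨hyK, hyV⟩
    have hnorm : ‖y‖ = ‖x₀‖ :=
      (mem_sphere_zero_iff_norm.1 (hKr hyK)).trans (mem_sphere_zero_iff_norm.1 hx₀r).symm
    have hne : y ≠ x₀ := fun h => hyV (h ▸ hx₀V)
    obtain ⟨v, hv, hvy⟩ := exists_norm_eq_one_reflection_eq hnorm hne
    exact Set.mem_biUnion (mem_sphere_zero_iff_norm.2 hv) (Set.mem_preimage.2 (hvy ▸ hx₀V))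
  obtain ⟨s, hs, hfin, hsK⟩ := (hK.diff hV).elim_finite_subcover_image
    (fun v _ => hV.preimage (LinearIsometryEquiv.continuous _)) hcover
  exact ⟨s, hs, hfin, Set.sdiff_subset_iff.1 hsK⟩

end InnerProductSpace

section Measure

theorem upperSemicontinuous_measure_preimage_prodMk {X Y : Type*} [TopologicalSpace X]
    [TopologicalSpace Y] [MeasurableSpace Y] {μ : Measure Y} [μ.OuterRegular] {A : Set (X × Y)}
    {C : Set Y} (hA : IsClosed A) (hC : IsCompact C) (hAC : ∀ x, Prod.mk x ⁻¹' A ⊆ C) :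
    UpperSemicontinuous fun x => μ (Prod.mk x ⁻¹' A) := by
  intro x c hc
  obtain ⟨W, hAW, hW, hWc⟩ := Set.exists_isOpen_lt_of_lt _ _ hc
  have hnear : ∀ᶠ z in nhds x, ∀ y ∈ C \ W, (z, y) ∉ A :=
    (hC.diff hW).eventually_forall_of_forall_eventually fun y hy =>
      hA.isOpen_compl.mem_nhds fun hxy => hy.2 (hAW hxy)
  filter_upwards [hnear] with z hz
  have hzW : Prod.mk z ⁻¹' A ⊆ W := fun y hy => by_contra fun hyW => hz y ⟨hAC z hy, hyW⟩ hy
  exact (measure_mono hzW).trans_lt hWc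

theorem subset_of_isClosed_of_measure_le {X : Type*} [TopologicalSpace X] [MeasurableSpace X]
    [OpensMeasurableSpace X] {μ : Measure X} [μ.IsOpenPosMeasure] {A K : Set X} (hA : IsClosed A)
    (hAK : A ⊆ K) (hK : K ⊆ closure (interior K)) (hμ : μ K ≤ μ A) (hfin : μ K ≠ ⊤) : K ⊆ A := by
  have hnull : μ (K \ A) = 0 :=
    ae_le_set.1
      (ae_eq_of_subset_of_measure_ge hAK hμ hA.measurableSet.nullMeasurableSet hfin).symm.le
  have hempty : interior K \ A = ∅ :=
    (isOpen_interior.sdiff hA).eq_empty_of_measure_zero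
      (measure_mono_null (Set.sdiff_subset_sdiff_left interior_subset) hnull)
  exact hK.trans (closure_minimal (Set.sdiff_eq_empty.1 hempty) hA)

theorem eq_Icc_of_isClosed_of_volume_ge {A : Set ℝ} {a b : ℝ} (hA : IsClosed A)
    (hne : A.Nonempty) (hAab : A ⊆ Set.Icc a b) (hvol : ENNReal.ofReal (b - a) ≤ volume A) :
    A = Set.Icc a b := by
  obtain ⟨t, ht⟩ := hne
  rcases ((hAab ht).1.trans (hAab ht).2).eq_or_lt with rfl | hab
  · rw [Set.Icc_self] at hAab ⊢
    exact (Set.subset_singleton_iff_eq.1 hAab).resolve_left (Set.nonempty_of_mem ht).ne_empty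
  · refine hAab.antisymm (subset_of_isClosed_of_measure_le (μ := volume) hA hAab ?_ ?_ ?_)
    · rw [interior_Icc, closure_Ioo hab.ne]
    · rwa [Real.volume_Icc]
    · exact measure_Icc_lt_top.ne

end Measure

section Steiner

variable {n : ℕ} {u x p : EuclideanSpace ℝ (Fin n)} {E : Set (EuclideanSpace ℝ (Fin n))} {r : ℝ}

/-- The fiber `{t : p + t u ∈ E}` of `E` over `p` in direction `u`, whose one-dimensional measure
is `ℓ_{E,u}(p)`. -/
def steinerFiber (u : EuclideanSpace ℝ (Fin n)) (E : Set (EuclideanSpace ℝ (Fin n)))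
    (p : EuclideanSpace ℝ (Fin n)) : Set ℝ :=
  {t | p + t • u ∈ E}

theorem steinerProj_eq_sub_inner_smul (hu : ‖u‖ = 1) (x : EuclideanSpace ℝ (Fin n)) :
    steinerProj u x = x - inner ℝ u x • u := by
  rw [steinerProj, Submodule.coe_orthogonalProjectionOnto_apply,
    Submodule.starProjection_orthogonal_val, Submodule.starProjection_unit_singleton ℝ hu]

theorem steinerProj_add_inner_smul (hu : ‖u‖ = 1) (x : EuclideanSpace ℝ (Fin n)) :
    steinerProj u x + inner ℝ u x • u = x := by
  rw [steinerProj_eq_sub_inner_smul hu, sub_add_cancel]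

theorem steinerProj_add_neg_inner_smul (hu : ‖u‖ = 1) (x : EuclideanSpace ℝ (Fin n)) :
    steinerProj u x + (-inner ℝ u x) • u = (Submodule.span ℝ {u})ᗮ.reflection x := by
  have hproj : (Submodule.span ℝ {u})ᗮ.starProjection x = steinerProj u x := rfl
  rw [Submodule.reflection_apply, hproj, steinerProj_eq_sub_inner_smul hu]
  module

theorem inner_steinerProj (u x : EuclideanSpace ℝ (Fin n)) : inner ℝ u (steinerProj u x) = 0 :=
  Submodule.mem_orthogonal_singleton_iff_inner_right.1 (Subtype.property _)

theorem inner_steinerProj_add_smul (hu : ‖u‖ = 1) (x : EuclideanSpace ℝ (Fin n)) (t : ℝ) :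
    inner ℝ u (steinerProj u x + t • u) = t := by
  rw [inner_add_right, inner_steinerProj, inner_smul_right, real_inner_self_eq_norm_sq, hu]
  ring

theorem steinerProj_steinerProj_add_smul (hu : ‖u‖ = 1) (x : EuclideanSpace ℝ (Fin n)) (t : ℝ) :
    steinerProj u (steinerProj u x + t • u) = steinerProj u x := by
  rw [steinerProj_eq_sub_inner_smul hu (_ + _), inner_steinerProj_add_smul hu, add_sub_cancel_right]

theorem norm_sq_eq_norm_steinerProj_sq_add (hu : ‖u‖ = 1) (x : EuclideanSpace ℝ (Fin n)) :
    ‖x‖ ^ 2 = ‖steinerProj u x‖ ^ 2 + inner ℝ u x ^ 2 := by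
  rw [← norm_add_smul_sq_of_inner_eq_zero hu (inner_steinerProj u x),
    steinerProj_add_inner_smul hu]

theorem continuous_steinerProj (u : EuclideanSpace ℝ (Fin n)) : Continuous (steinerProj u) := by
  unfold steinerProj
  fun_prop

theorem steinerFiber_subset_Icc (hu : ‖u‖ = 1) (hEr : E ⊆ closedBall 0 r)
    (hp : inner ℝ u p = 0) :
    steinerFiber u E p ⊆ Set.Icc (-√(r ^ 2 - ‖p‖ ^ 2)) √(r ^ 2 - ‖p‖ ^ 2) := by
  intro t ht
  have hnorm : ‖p + t • u‖ ^ 2 ≤ r ^ 2 :=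
    pow_le_pow_left₀ (norm_nonneg _) (mem_closedBall_zero_iff.1 (hEr ht)) 2
  rw [norm_add_smul_sq_of_inner_eq_zero hu hp] at hnorm
  exact abs_le.1 (Real.abs_le_sqrt (by linarith))

theorem isClosed_steinerFiber (hE : IsClosed E) : IsClosed (steinerFiber u E p) :=
  hE.preimage (by fun_prop : Continuous fun t : ℝ => p + t • u)

theorem steinerFiber_steinerProj_nonempty_iff (hu : ‖u‖ = 1) :
    (steinerFiber u E (steinerProj u x)).Nonempty ↔ steinerProj u x ∈ steinerProj u '' E := by
  constructor
  · rintro ⟨t, ht⟩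
    exact ⟨_, ht, steinerProj_steinerProj_add_smul hu x t⟩
  · rintro ⟨z, hz, hzx⟩
    refine ⟨inner ℝ u z, ?_⟩
    rwa [steinerFiber, Set.mem_ofPred_eq, ← hzx, steinerProj_add_inner_smul hu]

theorem mem_steiner_iff (hu : ‖u‖ = 1) (hEr : E ⊆ closedBall 0 r) :
    x ∈ steiner u E ↔ (steinerFiber u E (steinerProj u x)).Nonempty ∧
      ENNReal.ofReal (2 * |inner ℝ u x|) ≤ volume (steinerFiber u E (steinerProj u x)) := by
  have hfin : volume (steinerFiber u E (steinerProj u x)) ≠ ⊤ :=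
    measure_ne_top_of_subset (steinerFiber_subset_Icc hu hEr (inner_steinerProj u x))
      measure_Icc_lt_top.ne
  rw [steinerFiber_steinerProj_nonempty_iff hu, ENNReal.ofReal_le_iff_le_toReal hfin,
    ← le_div_iff₀' two_pos]
  constructor
  · rintro ⟨_, ⟨z, hz, rfl⟩, t, ht, rfl⟩
    rw [steinerProj_steinerProj_add_smul hu, inner_steinerProj_add_smul hu]
    exact ⟨⟨z, hz, rfl⟩, ht⟩
  · rintro ⟨hx, ht⟩
    exact ⟨_, hx, _, ht, (steinerProj_add_inner_smul hu x).symm⟩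

theorem steiner_subset_closedBall (hu : ‖u‖ = 1) (hEr : E ⊆ closedBall 0 r) :
    steiner u E ⊆ closedBall 0 r := by
  intro x hx
  obtain ⟨⟨t, ht⟩, hvol⟩ := (mem_steiner_iff hu hEr).1 hx
  have hr : 0 ≤ r := (norm_nonneg _).trans (mem_closedBall_zero_iff.1 (hEr ht))
  set p := steinerProj u x
  have hchord := steinerFiber_subset_Icc hu hEr (inner_steinerProj u x)
  have hp : 0 ≤ r ^ 2 - ‖p‖ ^ 2 := by
    have hnorm := pow_le_pow_left₀ (norm_nonneg _) (mem_closedBall_zero_iff.1 (hEr ht)) 2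
    rw [norm_add_smul_sq_of_inner_eq_zero hu (inner_steinerProj u x)] at hnorm
    linarith [sq_nonneg t]
  have hle : |inner ℝ u x| ≤ √(r ^ 2 - ‖p‖ ^ 2) := by
    have hlen := hvol.trans (measure_mono hchord)
    rw [Real.volume_Icc, sub_neg_eq_add, ENNReal.ofReal_le_ofReal_iff (by positivity)] at hlen
    linarith
  have hsq : inner ℝ u x ^ 2 ≤ r ^ 2 - ‖p‖ ^ 2 := by
    rwa [← sq_abs, ← Real.le_sqrt (abs_nonneg _) hp]
  rw [mem_closedBall_zero_iff, ← sq_le_sq₀ (norm_nonneg x) hr,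
    norm_sq_eq_norm_steinerProj_sq_add hu]
  linarith

theorem upperSemicontinuous_volume_steinerFiber_steinerProj (hu : ‖u‖ = 1) (hE : IsClosed E)
    (hEr : E ⊆ closedBall 0 r) :
    UpperSemicontinuous fun x => volume (steinerFiber u E (steinerProj u x)) := by
  have hproj := continuous_steinerProj u
  have hclosed : IsClosed {z : EuclideanSpace ℝ (Fin n) × ℝ | steinerProj u z.1 + z.2 • u ∈ E} :=
    hE.preimage (by fun_prop)
  refine upperSemicontinuous_measure_preimage_prodMk hclosed
    (isCompact_Icc (a := -√(r ^ 2)) (b := √(r ^ 2))) fun x => ?_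
  have hle : √(r ^ 2 - ‖steinerProj u x‖ ^ 2) ≤ √(r ^ 2) :=
    Real.sqrt_le_sqrt (sub_le_self _ (sq_nonneg _))
  exact (steinerFiber_subset_Icc hu hEr (inner_steinerProj u x)).trans
    (Set.Icc_subset_Icc (neg_le_neg hle) hle)

theorem isCompact_steiner (hu : ‖u‖ = 1) (hE : IsCompact E) : IsCompact (steiner u E) := by
  obtain ⟨r, hEr⟩ := hE.isBounded.subset_closedBall 0
  have hproj := continuous_steinerProj u
  have heq : steiner u E = steinerProj u ⁻¹' (steinerProj u '' E) ∩
      {x | ENNReal.ofReal (2 * |inner ℝ u x|) ≤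
        volume (steinerFiber u E (steinerProj u x))} := by
    ext x
    rw [mem_steiner_iff hu hEr, steinerFiber_steinerProj_nonempty_iff hu]
    rfl
  have hhypo : IsClosed {x | ENNReal.ofReal (2 * |inner ℝ u x|) ≤
      volume (steinerFiber u E (steinerProj u x))} :=
    (upperSemicontinuous_volume_steinerFiber_steinerProj hu hE.isClosed
      hEr).IsClosed_hypograph.preimage (continuous_id.prodMk
      (ENNReal.continuous_ofReal.comp (by fun_prop)))
  refine (isCompact_closedBall 0 r).of_isClosed_subset ?_ (steiner_subset_closedBall hu hEr)
  rw [heq]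
  exact ((hE.image hproj).isClosed.preimage hproj).inter hhypo

theorem steinerFiber_eq_Icc_of_mem_steiner (hu : ‖u‖ = 1) (hE : IsClosed E)
    (hEr : E ⊆ closedBall 0 r) (hxr : ‖x‖ = r) (hx : x ∈ steiner u E) :
    steinerFiber u E (steinerProj u x) = Set.Icc (-|inner ℝ u x|) |inner ℝ u x| := by
  obtain ⟨hne, hvol⟩ := (mem_steiner_iff hu hEr).1 hx
  have hchord : √(r ^ 2 - ‖steinerProj u x‖ ^ 2) = |inner ℝ u x| := by
    rw [← hxr, norm_sq_eq_norm_steinerProj_sq_add hu, add_sub_cancel_left, Real.sqrt_sq_eq_abs]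
  have hsub := steinerFiber_subset_Icc hu hEr (inner_steinerProj u x)
  rw [hchord] at hsub
  refine eq_Icc_of_isClosed_of_volume_ge (isClosed_steinerFiber hE) hne hsub ?_
  rwa [sub_neg_eq_add, ← two_mul]

theorem mem_and_reflection_mem_of_mem_steiner (hu : ‖u‖ = 1) (hE : IsClosed E)
    (hEr : E ⊆ closedBall 0 r) (hxr : ‖x‖ = r) (hx : x ∈ steiner u E) :
    x ∈ E ∧ (Submodule.span ℝ {u})ᗮ.reflection x ∈ E := by
  have hfiber := steinerFiber_eq_Icc_of_mem_steiner hu hE hEr hxr hx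
  have hpos : inner ℝ u x ∈ steinerFiber u E (steinerProj u x) :=
    hfiber ▸ abs_le.1 le_rfl
  have hneg : -inner ℝ u x ∈ steinerFiber u E (steinerProj u x) :=
    hfiber ▸ abs_le.1 (abs_neg _).le
  rw [steinerFiber, Set.mem_ofPred_eq] at hpos hneg
  rw [steinerProj_add_inner_smul hu] at hpos
  rw [steinerProj_add_neg_inner_smul hu] at hneg
  exact ⟨hpos, hneg⟩

theorem isCompact_foldl_steiner {vs : List (EuclideanSpace ℝ (Fin n))}
    (hvs : ∀ v ∈ vs, ‖v‖ = 1) (hE : IsCompact E) :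
    IsCompact (vs.foldl (fun A v => steiner v A) E) :=
  List.foldlRecOn vs _ hE fun _ hA v hv => isCompact_steiner (hvs v hv) hA

theorem foldl_steiner_subset_closedBall {vs : List (EuclideanSpace ℝ (Fin n))}
    (hvs : ∀ v ∈ vs, ‖v‖ = 1) (hEr : E ⊆ closedBall 0 r) :
    vs.foldl (fun A v => steiner v A) E ⊆ closedBall 0 r :=
  List.foldlRecOn (motive := (· ⊆ closedBall 0 r)) vs _ hEr
    fun _ hA v hv => steiner_subset_closedBall (hvs v hv) hA

theorem mem_and_reflection_mem_of_mem_foldl_steiner {vs : List (EuclideanSpace ℝ (Fin n))}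
    (hvs : ∀ v ∈ vs, ‖v‖ = 1) (hE : IsCompact E) (hEr : E ⊆ closedBall 0 r) (hxr : ‖x‖ = r)
    (hx : x ∈ vs.foldl (fun A v => steiner v A) E) :
    x ∈ E ∧ ∀ v ∈ vs, (Submodule.span ℝ {v})ᗮ.reflection x ∈ E := by
  induction vs generalizing E with
  | nil => exact ⟨hx, by simp⟩
  | cons w vs ih =>
    rw [List.forall_mem_cons] at hvs ⊢
    obtain ⟨hw, hvs⟩ := hvs
    obtain ⟨hxw, hxvs⟩ := ih hvs (isCompact_steiner hw hE) (steiner_subset_closedBall hw hEr) hx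
    obtain ⟨hxE, hxwE⟩ := mem_and_reflection_mem_of_mem_steiner hw hE.isClosed hEr hxr hxw
    refine ⟨hxE, hxwE, fun v hv => ?_⟩
    exact (mem_and_reflection_mem_of_mem_steiner hw hE.isClosed hEr
      ((LinearIsometryEquiv.norm_map _ x).trans hxr) (hxvs v hv)).1

theorem maxNorm_lt_of_forall_norm_lt (hE : IsCompact E) (hr : 0 < r) (h : ∀ x ∈ E, ‖x‖ < r) :
    maxNorm E < r := by
  rcases E.eq_empty_or_nonempty with rfl | hne
  · rwa [maxNorm, Set.image_empty, Real.sSup_empty]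
  · exact (hE.sSup_lt_iff_of_continuous hne continuous_norm.continuousOn r).2 h

end Steiner

/-- If a nonempty compact set `E ⊆ B̄_r` misses a nonempty relatively open subset of the
sphere `∂B̄_r`, then finitely many Steiner symmetrizations strictly decrease the
circumscribed radius: `max_{x ∈ S_{v_m}⋯S_{v_1}E} |x| < r`. -/
theorem stmt10 (n : ℕ) (hn : 2 ≤ n) (r : ℝ) (hr : 0 < r)
    (E : Set (EuclideanSpace ℝ (Fin n))) (hEne : E.Nonempty) (hE : IsCompact E)
    (hEsub : E ⊆ closedBall (0 : EuclideanSpace ℝ (Fin n)) r)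
    (U : Set (EuclideanSpace ℝ (Fin n))) (hUne : U.Nonempty)
    (hUopen : ∃ V : Set (EuclideanSpace ℝ (Fin n)),
      IsOpen V ∧ U = V ∩ sphere (0 : EuclideanSpace ℝ (Fin n)) r)
    (hUE : U ∩ E = ∅) :
    ∃ vs : List (EuclideanSpace ℝ (Fin n)), (∀ v ∈ vs, ‖v‖ = 1) ∧
      maxNorm (vs.foldl (fun A v => steiner v A) E) < r := by
  obtain ⟨V, hV, rfl⟩ := hUopen
  obtain ⟨x₀, hx₀V, hx₀r⟩ := hUne
  have hmiss : ∀ y ∈ E, ‖y‖ = r → y ∉ V := fun y hyE hyr hyV =>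
    Set.eq_empty_iff_forall_notMem.1 hUE y ⟨⟨hyV, mem_sphere_zero_iff_norm.2 hyr⟩, hyE⟩
  obtain ⟨s, hs, hfin, hcover⟩ :=
    exists_finite_reflection_cover (isCompact_sphere 0 r) subset_rfl hV hx₀V hx₀r
  have hunit : ∀ v ∈ hfin.toFinset.toList, ‖v‖ = 1 := fun v hv =>
    mem_sphere_zero_iff_norm.1 (hs (by simpa using hv))
  refine ⟨_, hunit, maxNorm_lt_of_forall_norm_lt (isCompact_foldl_steiner hunit hE) hr
    fun x hx => ?_⟩
  have hxle : ‖x‖ ≤ r := mem_closedBall_zero_iff.1 (foldl_steiner_subset_closedBall hunit hEsub hx)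
  refine hxle.lt_of_ne fun hxr => ?_
  obtain ⟨hxE, hreflE⟩ := mem_and_reflection_mem_of_mem_foldl_steiner hunit hE hEsub hxr hx
  rcases hcover (mem_sphere_zero_iff_norm.2 hxr) with hxV | hxV
  · exact hmiss x hxE hxr hxV
  · obtain ⟨v, hv, hvV⟩ := Set.mem_iUnion₂.1 hxV
    exact hmiss _ (hreflE v (by simpa using hv)) ((LinearIsometryEquiv.norm_map _ x).trans hxr) hvV
end
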